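/- For every a ∈ ℝⁿ, every δ > 0, and every index i ∈ {1,…,n}, the isotonic projection satisfies (a + δ·eᵢ)⁺ ≥ a⁺ in the component-wise sense, where eᵢ is the i-th canonical basis vector of ℝⁿ; likewise (a − δ·eᵢ)⁺ ≤ a⁺ component-wise. Moreover, the sum of the entries of (a + δ·eᵢ)⁺ equals the sum of the entries of a⁺ plus δ. -/

import Mathlib

open Finset

/-- The isotonic cone `{x : x₁ ≥ x₂ ≥ ⋯ ≥ xₙ}` in `ℝⁿ`. -/
def isoCone (n : ℕ) : Set (EuclideanSpace ℝ (Fin n)) :=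
  {x | ∀ i j : Fin n, i ≤ j → x j ≤ x i}

/-- `p` is the metric (Euclidean) projection of `y` onto `S`. -/
def IsProjOn {n : ℕ} (S : Set (EuclideanSpace ℝ (Fin n)))
    (y p : EuclideanSpace ℝ (Fin n)) : Prop :=
  p ∈ S ∧ ∀ r ∈ S, ‖y - p‖ ≤ ‖y - r‖

/-!
Let `p` and `q` be the projections of `a ≤ b` onto a convex sublattice. Test the variational
inequality at `p` with `p ⊓ q = p - (p - q)⁺` and the one at `q` with `p ⊔ q = q + (p - q)⁺`; their
sum bounds `‖(p - q)⁺‖²` by `0`, so `p ≤ q`. The isotonic cone is also invariant under translation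
by constant vectors, so `a - a⁺` is orthogonal to them and `a`, `a⁺` have the same coordinate sum.
-/

lemma sq_posPart_sub_le {R : Type*} [CommRing R] [LinearOrder R] [IsOrderedRing R] {a b : R}
    (hab : a ≤ b) (p q : R) :
    (p - q)⁺ ^ 2 ≤ (a - p) * (p ⊓ q - p) + (b - q) * (p ⊔ q - q) := by
  rw [inf_eq_sub_posPart_sub, sup_eq_add_posPart_sub]
  have hgap : 0 ≤ (b - a) * (p - q)⁺ := mul_nonneg (sub_nonneg.2 hab) (posPart_nonneg _)
  have hsq : (p - q) * (p - q)⁺ = (p - q)⁺ ^ 2 := by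
    rcases le_total (p - q) 0 with h | h
    · simp [posPart_eq_zero.2 h]
    · rw [posPart_eq_self.2 h, sq]
  calc
    (p - q)⁺ ^ 2 ≤ (b - a) * (p - q)⁺ + (p - q) * (p - q)⁺ := by
      rw [hsq]
      exact le_add_of_nonneg_left hgap
    _ = (a - p) * (p - (p - q)⁺ - p) + (b - q) * (q + (p - q)⁺ - q) := by ring

lemma isSublattice_setOf_antitone {α β : Type*} [Preorder α] [Lattice β] :
    IsSublattice {f : α → β | Antitone f} where
  supClosed _ hf _ hg := hf.sup hg
  infClosed _ hf _ hg := hf.inf hg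

namespace IsProjOn

variable {n : ℕ} {S : Set (EuclideanSpace ℝ (Fin n))} {a b p q : EuclideanSpace ℝ (Fin n)}

lemma norm_sub_eq_iInf (hp : IsProjOn S a p) : ‖a - p‖ = ⨅ r : S, ‖a - r‖ := by
  have : Nonempty S := ⟨⟨p, hp.1⟩⟩
  have hbdd : BddBelow (Set.range fun r : S ↦ ‖a - r‖) :=
    ⟨0, Set.forall_mem_range.2 fun _ ↦ norm_nonneg _⟩
  exact le_antisymm (le_ciInf fun r ↦ hp.2 r r.2) (ciInf_le hbdd ⟨p, hp.1⟩)

lemma inner_sub_sub_nonpos (hS : Convex ℝ S) (hp : IsProjOn S a p)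
    {r : EuclideanSpace ℝ (Fin n)} (hr : r ∈ S) : inner ℝ (a - p) (r - p) ≤ 0 :=
  (norm_eq_iInf_iff_real_inner_le_zero hS hp.1).1 hp.norm_sub_eq_iInf r hr

lemma inner_sub_eq_zero_of_mem (hS : Convex ℝ S) (hp : IsProjOn S a p)
    {v : EuclideanSpace ℝ (Fin n)} (hadd : p + v ∈ S) (hsub : p - v ∈ S) :
    inner ℝ (a - p) v = 0 := by
  have hle := hp.inner_sub_sub_nonpos hS hadd
  have hge := hp.inner_sub_sub_nonpos hS hsub
  rw [add_sub_cancel_left] at hle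
  rw [sub_sub_cancel_left, inner_neg_right, neg_nonpos] at hge
  exact hle.antisymm hge

theorem apply_le_apply (hS : Convex ℝ S) (hlat : IsSublattice (WithLp.toLp 2 ⁻¹' S))
    (hp : IsProjOn S a p) (hq : IsProjOn S b q) (hab : ∀ k, a k ≤ b k) (k : Fin n) :
    p k ≤ q k := by
  have hinf := hp.inner_sub_sub_nonpos hS (hlat.infClosed (a := ⇑p) hp.1 (b := ⇑q) hq.1)
  have hsup := hq.inner_sub_sub_nonpos hS (hlat.supClosed (a := ⇑p) hp.1 (b := ⇑q) hq.1)
  have hsum : ∑ j, (p j - q j)⁺ ^ 2 ≤ 0 :=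
    calc
      ∑ j, (p j - q j)⁺ ^ 2
          ≤ ∑ j, ((a j - p j) * (p j ⊓ q j - p j) + (b j - q j) * (p j ⊔ q j - q j)) :=
        sum_le_sum fun j _ ↦ sq_posPart_sub_le (hab j) (p j) (q j)
      _ = inner ℝ (a - p) (WithLp.toLp 2 (⇑p ⊓ ⇑q) - p)
          + inner ℝ (b - q) (WithLp.toLp 2 (⇑p ⊔ ⇑q) - q) := by
        simp [PiLp.inner_apply, sum_add_distrib, mul_comm]
      _ ≤ 0 := add_nonpos hinf hsup
  have hk : (p k - q k)⁺ ^ 2 ≤ 0 :=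
    (single_le_sum (fun j _ ↦ sq_nonneg (p j - q j)⁺) (mem_univ k)).trans hsum
  exact sub_nonpos.1 (posPart_eq_zero.1 (sq_nonpos_iff _ |>.1 hk))

end IsProjOn

section IsoCone

variable {n : ℕ}

lemma toLp_preimage_isoCone : WithLp.toLp 2 ⁻¹' isoCone n = {x : Fin n → ℝ | Antitone x} :=
  rfl

lemma convex_isoCone : Convex ℝ (isoCone n) := by
  intro x hx y hy s t hs ht _ i j hij
  exact add_le_add (mul_le_mul_of_nonneg_left (hx i j hij) hs)
    (mul_le_mul_of_nonneg_left (hy i j hij) ht)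

lemma isSublattice_toLp_preimage_isoCone : IsSublattice (WithLp.toLp 2 ⁻¹' isoCone n) := by
  rw [toLp_preimage_isoCone]
  exact isSublattice_setOf_antitone

lemma add_const_mem_isoCone {x : EuclideanSpace ℝ (Fin n)} (hx : x ∈ isoCone n) (c : ℝ) :
    x + WithLp.toLp 2 (fun _ ↦ c) ∈ isoCone n :=
  fun i j hij ↦ add_le_add_left (hx i j hij) c

lemma IsProjOn.sum_eq_of_isoCone {a p : EuclideanSpace ℝ (Fin n)}
    (hp : IsProjOn (isoCone n) a p) : ∑ k, p k = ∑ k, a k := by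
  have hsub : p - WithLp.toLp 2 (fun _ ↦ 1) ∈ isoCone n := by
    rw [sub_eq_add_neg]
    exact add_const_mem_isoCone hp.1 (-1)
  have horth := hp.inner_sub_eq_zero_of_mem convex_isoCone (add_const_mem_isoCone hp.1 1) hsub
  have hsum : ∑ k, a k - ∑ k, p k = 0 := by
    simpa [PiLp.inner_apply, sum_sub_distrib] using horth
  exact (sub_eq_zero.1 hsum).symm

lemma IsProjOn.apply_le_apply_of_isoCone {a b p q : EuclideanSpace ℝ (Fin n)}
    (hp : IsProjOn (isoCone n) a p) (hq : IsProjOn (isoCone n) b q)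
    (hab : ∀ k, a k ≤ b k) (k : Fin n) : p k ≤ q k :=
  hp.apply_le_apply convex_isoCone isSublattice_toLp_preimage_isoCone hq hab k

end IsoCone

/-- Lemma 6.7 (`lm:mono`) together with Remark 6.1: the isotonic projection is monotone
under adding (resp. subtracting) `δ` at one coordinate, and the sum of entries of
`(a + δ eᵢ)⁺` equals that of `a⁺` plus `δ`. -/
theorem isoProj_componentwise_mono {n : ℕ} (a : EuclideanSpace ℝ (Fin n))
    (δ : ℝ) (hδ : 0 < δ) (i : Fin n)
    (ap bp cp : EuclideanSpace ℝ (Fin n))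
    (hap : IsProjOn (isoCone n) a ap)
    (hbp : IsProjOn (isoCone n) (a + EuclideanSpace.single i δ) bp)
    (hcp : IsProjOn (isoCone n) (a - EuclideanSpace.single i δ) cp) :
    (∀ k : Fin n, ap k ≤ bp k) ∧ (∀ k : Fin n, cp k ≤ ap k) ∧
      ∑ k, bp k = (∑ k, ap k) + δ := by
  have hsingle : 0 ≤ (Pi.single i δ : Fin n → ℝ) := Pi.single_nonneg.2 hδ.le
  refine ⟨hap.apply_le_apply_of_isoCone hbp fun k ↦ ?_,
    hcp.apply_le_apply_of_isoCone hap fun k ↦ ?_, ?_⟩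
  · exact le_add_of_nonneg_right (hsingle k)
  · exact sub_le_self _ (hsingle k)
  · rw [hap.sum_eq_of_isoCone, hbp.sum_eq_of_isoCone]
    simp [sum_add_distrib]
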